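/- Let Ω ⊂ ℝ^d be a bounded open set and W : Ω×ℝ^{m×d} → [0,+∞] be jointly measurable and convex in the second variable. Assume there exists θ > 0 such that x ↦ sup_{|ξ|≤θ} W(x,ξ) belongs to L¹(Ω). Let g ∈ W^{1,p}(Ω)^m be such that ∫_Ω W(x, s Dg(x)) dx < +∞ for some s > 1. Then there exists r > 0 such that x ↦ sup_{|ξ|≤r} W(x, Dg(x)+ξ) belongs to L¹(Ω). In particular, for a.e. x ∈ Ω the map ξ ↦ W(x,ξ) is continuous at ξ = Dg(x). -/

import Mathlib

open MeasureTheory Metric Set Filter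
open scoped ENNReal Topology NNReal RealInnerProductSpace

noncomputable section

/-- `ℝ^d` as a Euclidean space. -/
abbrev Euc (d : ℕ) := EuclideanSpace ℝ (Fin d)

/-- The space `ℝ^{m×d}` of `m×d` matrices. -/
abbrev Mat (m d : ℕ) := Fin m → Fin d → ℝ

/-- Frobenius (Euclidean) norm of an `m×d` matrix. -/
def frobNorm {m d : ℕ} (ξ : Mat m d) : ℝ :=
  Real.sqrt (∑ i, ∑ j, ξ i j ^ 2)

/-- `φ ∈ C_c^∞(Ω)^m`: a smooth function with compact support contained in `Ω`. -/
def IsCcSmooth {d m : ℕ} (Ω : Set (Euc d)) (φ : Euc d → Euc m) : Prop :=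
  ContDiff ℝ (⊤ : ℕ∞) φ ∧ HasCompactSupport φ ∧ tsupport φ ⊆ Ω

/-- The (classical) Jacobian matrix of a differentiable map. -/
def smoothJac {d m : ℕ} (φ : Euc d → Euc m) (x : Euc d) : Mat m d :=
  fun i j => fderiv ℝ φ x (EuclideanSpace.single j 1) i

/-- `Du` is the weak Jacobian of `u` on `Ω` (integration by parts against test functions). -/
def IsWeakJacobianOn {d m : ℕ} (Ω : Set (Euc d)) (u : Euc d → Euc m)
    (Du : Euc d → Mat m d) : Prop :=
  ∀ φ : Euc d → ℝ, ContDiff ℝ (⊤ : ℕ∞) φ → HasCompactSupport φ → tsupport φ ⊆ Ω →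
    ∀ (i : Fin m) (j : Fin d),
      ∫ x in Ω, u x i * fderiv ℝ φ x (EuclideanSpace.single j 1) =
        - ∫ x in Ω, Du x i j * φ x

/-- `u ∈ W^{1,p}(Ω)^m` with weak Jacobian `Du`. -/
def MemW1p {d m : ℕ} (Ω : Set (Euc d)) (p : ℝ≥0∞) (u : Euc d → Euc m)
    (Du : Euc d → Mat m d) : Prop :=
  MemLp u p (volume.restrict Ω) ∧ MemLp Du p (volume.restrict Ω) ∧ IsWeakJacobianOn Ω u Du

/-- Strong convergence `uₙ → v` in `W^{1,p}(Ω)^m` (together with the Jacobians). -/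
def TendstoW1p {d m : ℕ} (Ω : Set (Euc d)) (p : ℝ≥0∞)
    (u : ℕ → Euc d → Euc m) (Du : ℕ → Euc d → Mat m d)
    (v : Euc d → Euc m) (Dv : Euc d → Mat m d) : Prop :=
  Tendsto (fun n => eLpNorm (u n - v) p (volume.restrict Ω)) atTop (𝓝 0) ∧
  Tendsto (fun n => eLpNorm (Du n - Dv) p (volume.restrict Ω)) atTop (𝓝 0)

/-- `v ∈ W_0^{1,p}(Ω)^m`, i.e. `v ∈ W^{1,p}` and `v` is a `W^{1,p}`-limit of functions in
`C_c^∞(Ω)^m`. -/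
def MemW1p0 {d m : ℕ} (Ω : Set (Euc d)) (p : ℝ≥0∞) (v : Euc d → Euc m)
    (Dv : Euc d → Mat m d) : Prop :=
  MemW1p Ω p v Dv ∧
  ∃ w : ℕ → Euc d → Euc m, (∀ n, IsCcSmooth Ω (w n)) ∧
    TendstoW1p Ω p w (fun n => smoothJac (w n)) v Dv

/-- `Ω` has Lipschitz boundary: near each boundary point, `Ω` is the subgraph of a Lipschitz
function over a hyperplane. -/
def HasLipschitzBoundary {d : ℕ} (Ω : Set (Euc d)) : Prop :=
  ∀ x ∈ frontier Ω, ∃ (ν : Euc d) (r L : ℝ) (ψ : Euc d → ℝ),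
    ‖ν‖ = 1 ∧ 0 < r ∧ 0 ≤ L ∧ LipschitzWith (Real.toNNReal L) ψ ∧
    ∀ y ∈ ball x r, (y ∈ Ω ↔ ⟪y, ν⟫ < ψ (y - ⟪y, ν⟫ • ν))

/-- Convexity of a `[0,+∞]`-valued function. -/
def ConvexENNReal {m d : ℕ} (f : Mat m d → ℝ≥0∞) : Prop :=
  ∀ ξ η : Mat m d, ∀ t : ℝ, 0 ≤ t → t ≤ 1 →
    f (t • ξ + (1 - t) • η) ≤ ENNReal.ofReal t * f ξ + ENNReal.ofReal (1 - t) * f η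

/-- The convex biconjugate `f**` of a `[0,+∞]`-valued function: the supremum of all affine
minorants of `f`. -/
def biconj {m d : ℕ} (f : Mat m d → ℝ≥0∞) (ξ : Mat m d) : ℝ≥0∞ :=
  ⨆ (L : Mat m d →ₗ[ℝ] ℝ) (c : ℝ) (_ : ∀ η, ENNReal.ofReal (L η + c) ≤ f η),
    ENNReal.ofReal (L ξ + c)

/-- Assumption (a4): the local stability estimate
`W(x,ξ) ≤ C_M (ess inf_{y ∈ B̄_δ(x) ∩ Ω} W(y,·))**(ξ) + α_M(x)` for `|ξ| ≤ M δ^{-d/p}`. -/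
def StabilityEstimate {d m : ℕ} (Ω : Set (Euc d)) (p : ℝ)
    (W : Euc d → Mat m d → ℝ≥0∞) : Prop :=
  ∀ M : ℝ, 1 < M → ∃ (CM δ₀ : ℝ) (αM : Euc d → ℝ≥0∞),
    0 < CM ∧ 0 < δ₀ ∧ (∫⁻ x in Ω, αM x) < ⊤ ∧
    ∀ δ : ℝ, 0 < δ → δ < δ₀ → ∀ x ∈ Ω, ∀ ξ : Mat m d,
      frobNorm ξ ≤ M * δ ^ (-(d : ℝ) / p) →
      W x ξ ≤ ENNReal.ofReal CM *
          biconj (fun η => essInf (fun y => W y η) (volume.restrict (closedBall x δ ∩ Ω))) ξ +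
        αM x

/-- Assumption 1 of the paper (items (a1)–(a4)) for the integrand `W` on `Ω`, with lower
growth exponent `p`. -/
def Assumption1 {d m : ℕ} (Ω : Set (Euc d)) (p : ℝ) (W : Euc d → Mat m d → ℝ≥0∞) : Prop :=
  Measurable (Function.uncurry W) ∧
  (∀ᵐ x ∂volume.restrict Ω, ConvexENNReal (W x) ∧ LowerSemicontinuous (W x)) ∧
  (∀ᵐ x ∂volume.restrict Ω, ∀ ξ, ENNReal.ofReal (frobNorm ξ ^ p) ≤ W x ξ) ∧
  ((p ≤ (d : ℝ) - 1 →
      ∃ (C q : ℝ) (α : Euc d → ℝ≥0∞), 0 < C ∧ p < q ∧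
        (p < (d : ℝ) - 1 → q ≤ ((d : ℝ) - 1) * p / ((d : ℝ) - 1 - p)) ∧
        (∫⁻ x in Ω, α x) < ⊤ ∧
        ∀ᵐ x ∂volume.restrict Ω, ∀ ξ,
          W x ξ ≤ ENNReal.ofReal (C * frobNorm ξ ^ q) + α x) ∧
    ((d : ℝ) - 1 < p →
      ∃ θ : ℝ, 0 < θ ∧
        (∫⁻ x in Ω, ⨆ ξ ∈ {ξ : Mat m d | frobNorm ξ ≤ θ}, W x ξ) < ⊤)) ∧
  StabilityEstimate Ω p W


theorem aux_frob_cont {m d : ℕ} : Continuous (frobNorm : Mat m d → ℝ) := by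
  unfold frobNorm
  fun_prop

theorem aux_norm_le_frob {m d : ℕ} (ξ : Mat m d) : ‖ξ‖ ≤ frobNorm ξ := by
  have h0 : 0 ≤ frobNorm ξ := Real.sqrt_nonneg _
  refine (pi_norm_le_iff_of_nonneg h0).2 fun i => (pi_norm_le_iff_of_nonneg h0).2 fun j => ?_
  rw [Real.norm_eq_abs]
  refine Real.abs_le_sqrt ?_
  calc ξ i j ^ 2 ≤ ∑ j, ξ i j ^ 2 :=
        Finset.single_le_sum (f := fun j => ξ i j ^ 2) (fun _ _ => sq_nonneg _)
          (Finset.mem_univ j)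
    _ ≤ _ := Finset.single_le_sum (f := fun i => ∑ j, ξ i j ^ 2)
          (fun _ _ => Finset.sum_nonneg fun _ _ => sq_nonneg _) (Finset.mem_univ i)

theorem aux_sublevel {m d : ℕ} {f : Mat m d → ℝ≥0∞} (hf : ConvexENNReal f) (c : ℝ≥0∞) :
    Convex ℝ {ξ | f ξ ≤ c} := by
  intro x hx y hy a b ha hb hab
  have hb' : b = 1 - a := by linarith
  subst hb'
  calc f (a • x + (1 - a) • y) ≤ _ := hf x y a ha (by linarith)
    _ ≤ ENNReal.ofReal a * c + ENNReal.ofReal (1 - a) * c := by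
        gcongr
        · exact hx
        · exact hy
    _ = c := by
        rw [← add_mul, ← ENNReal.ofReal_add ha hb]
        simp

theorem aux_cont {m d : ℕ} {f : Mat m d → ℝ≥0∞} (hf : ConvexENNReal f) (ξ₀ : Mat m d)
    (ρ : ℝ) (hρ : 0 < ρ) (h : ∀ η ∈ ball ξ₀ ρ, f η ≠ ⊤) : ContinuousAt f ξ₀ := by
  have hconv : ConvexOn ℝ (ball ξ₀ ρ) (fun η => (f η).toReal) := by
    refine ⟨convex_ball _ _, ?_⟩
    intro x hx y hy a b ha hb hab
    have hb' : b = 1 - a := by linarith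
    subst hb'
    have h1 := hf x y a ha (by linarith)
    have h2 : ENNReal.ofReal a * f x ≠ ⊤ := ENNReal.mul_ne_top ENNReal.ofReal_ne_top (h x hx)
    have h3 : ENNReal.ofReal (1 - a) * f y ≠ ⊤ :=
      ENNReal.mul_ne_top ENNReal.ofReal_ne_top (h y hy)
    have h4 := ENNReal.toReal_mono (ENNReal.add_ne_top.2 ⟨h2, h3⟩) h1
    rw [ENNReal.toReal_add h2 h3, ENNReal.toReal_mul, ENNReal.toReal_mul,
      ENNReal.toReal_ofReal ha, ENNReal.toReal_ofReal hb] at h4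
    simpa using h4
  have hc : ContinuousAt (fun η => (f η).toReal) ξ₀ :=
    (hconv.continuousOn isOpen_ball).continuousAt (ball_mem_nhds _ hρ)
  have hc2 : ContinuousAt (fun η => ENNReal.ofReal (f η).toReal) ξ₀ :=
    ENNReal.continuous_ofReal.continuousAt.comp hc
  refine hc2.congr ?_
  filter_upwards [ball_mem_nhds ξ₀ hρ] with η hη
  exact ENNReal.ofReal_toReal (h η hη)

/-- **Lemma 3.3.** Let `Ω ⊂ ℝ^d` be a bounded open set and
`W : Ω × ℝ^{m×d} → [0,+∞]` jointly measurable and convex in the second variable. Assume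
`x ↦ sup_{|ξ|≤θ} W(x,ξ) ∈ L¹(Ω)` for some `θ > 0`, and let `g ∈ W^{1,p}(Ω)^m` satisfy
`∫_Ω W(x, s Dg) dx < ∞` for some `s > 1`. Then there is `r > 0` with
`x ↦ sup_{|ξ|≤r} W(x, Dg(x)+ξ) ∈ L¹(Ω)`; in particular for a.e. `x ∈ Ω` the map
`ξ ↦ W(x,ξ)` is continuous at `ξ = Dg(x)`. -/
theorem integrable_sup_around_gradient
    (d m : ℕ) (Ω : Set (Euc d)) (hΩo : IsOpen Ω) (hΩb : Bornology.IsBounded Ω)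
    (W : Euc d → Mat m d → ℝ≥0∞)
    (hWmeas : Measurable (Function.uncurry W))
    (hWconv : ∀ x ∈ Ω, ConvexENNReal (W x))
    (θ : ℝ) (hθ : 0 < θ)
    (hsup : (∫⁻ x in Ω, ⨆ ξ ∈ {ξ : Mat m d | frobNorm ξ ≤ θ}, W x ξ) < ⊤)
    (p : ℝ) (hp : 1 ≤ p)
    (g : Euc d → Euc m) (Dg : Euc d → Mat m d)
    (hg : MemW1p Ω (ENNReal.ofReal p) g Dg)
    (hgW : ∃ s : ℝ, 1 < s ∧ (∫⁻ x in Ω, W x (s • Dg x)) < ⊤) :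
    (∃ r : ℝ, 0 < r ∧
        (∫⁻ x in Ω, ⨆ ξ ∈ {ξ : Mat m d | frobNorm ξ ≤ r}, W x (Dg x + ξ)) < ⊤) ∧
    ∀ᵐ x ∂volume.restrict Ω, ContinuousAt (W x) (Dg x) := by
  obtain ⟨s, hs, hgW⟩ := hgW
  have hball : {ξ : Mat m d | frobNorm ξ ≤ θ} ∈ 𝓝 (0 : Mat m d) := by
    have h0 : frobNorm (0 : Mat m d) < θ := by simpa [frobNorm] using hθ
    filter_upwards [aux_frob_cont.continuousAt.eventually (gt_mem_nhds h0)] with ξ hξ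
    exact le_of_lt hξ
  obtain ⟨b, hb0, hbs⟩ := exists_mem_interior_convexHull_affineBasis hball
  obtain ⟨ρ, hρ, hρb⟩ := Metric.mem_nhds_iff.1 (mem_interior_iff_mem_nhds.1 hb0)
  set M : Euc d → ℝ≥0∞ := fun x => ∑ i, W x (b i) with hM
  have hWb : ∀ i, Measurable fun x => W x (b i) := fun i =>
    hWmeas.comp (measurable_id.prodMk measurable_const)
  have hMmeas : Measurable M := Finset.measurable_fun_sum _ fun i _ => hWb i
  have hMint : (∫⁻ x in Ω, M x) ≠ ⊤ := by
    rw [hM, lintegral_finset_sum _ fun i _ => hWb i]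
    refine ENNReal.sum_ne_top.2 fun i _ => ne_of_lt (lt_of_le_of_lt ?_ hsup)
    refine lintegral_mono fun x => ?_
    exact le_iSup₂_of_le (b i) (hbs (subset_convexHull ℝ _ (mem_range_self i))) le_rfl
  have hMle : ∀ x ∈ Ω, ∀ ξ ∈ ball (0 : Mat m d) ρ, W x ξ ≤ M x := by
    intro x hx ξ hξ
    refine convexHull_min ?_ (aux_sublevel (hWconv x hx) (M x)) (hρb hξ)
    rintro _ ⟨i, rfl⟩
    exact Finset.single_le_sum (f := fun i => W x (b i)) (fun _ _ => zero_le) (Finset.mem_univ i)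
  have hDg : AEMeasurable (fun x => W x (s • Dg x)) (volume.restrict Ω) :=
    hWmeas.comp_aemeasurable
      (aemeasurable_id.prodMk (hg.2.1.aestronglyMeasurable.aemeasurable.const_smul s))
  have hs0 : 0 < s := by linarith
  have ht1 : s⁻¹ < 1 := inv_lt_one_of_one_lt₀ hs
  have ht0 : 0 < s⁻¹ := inv_pos.2 hs0
  set t := s⁻¹ with ht
  have h1t : 0 < 1 - t := by linarith
  have key : ∀ x ∈ Ω, ∀ ξ ∈ ball (0 : Mat m d) ((1 - t) * ρ),
      W x (Dg x + ξ) ≤ W x (s • Dg x) + M x := by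
    intro x hx ξ hξ
    have hmem : (1 - t)⁻¹ • ξ ∈ ball (0 : Mat m d) ρ := by
      rw [mem_ball_zero_iff] at hξ ⊢
      rw [norm_smul, Real.norm_of_nonneg (inv_nonneg.2 h1t.le), inv_mul_lt_iff₀ h1t]
      exact hξ
    have h := hWconv x hx (s • Dg x) ((1 - t)⁻¹ • ξ) t ht0.le ht1.le
    rw [smul_smul, smul_smul, mul_inv_cancel₀ h1t.ne', ht, inv_mul_cancel₀ hs0.ne', one_smul,
      one_smul, ← ht] at h
    refine h.trans (add_le_add ?_ ?_)
    · exact mul_le_of_le_one_left' (ENNReal.ofReal_le_one.2 ht1.le)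
    · exact (mul_le_of_le_one_left' (ENNReal.ofReal_le_one.2 (by linarith))).trans
        (hMle x hx _ hmem)
  have hR : 0 < (1 - t) * ρ := mul_pos h1t hρ
  refine ⟨⟨(1 - t) * ρ / 2, by linarith, ?_⟩, ?_⟩
  · calc _ ≤ ∫⁻ x in Ω, (W x (s • Dg x) + M x) := by
          refine setLIntegral_mono' hΩo.measurableSet fun x hx => iSup₂_le fun ξ hξ => ?_
          refine key x hx ξ ?_
          rw [mem_ball_zero_iff]
          have h1 := aux_norm_le_frob ξ
          have h2 : frobNorm ξ ≤ (1 - t) * ρ / 2 := hξ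
          linarith
      _ < ⊤ := by
          rw [lintegral_add_right _ hMmeas]
          exact ENNReal.add_lt_top.2 ⟨hgW, hMint.lt_top⟩
  · filter_upwards [ae_restrict_mem hΩo.measurableSet, ae_lt_top' hDg hgW.ne,
      ae_lt_top hMmeas hMint] with x hx h1 h2
    refine aux_cont (hWconv x hx) _ _ hR fun η hη => ?_
    have h := key x hx (η - Dg x) (by rwa [mem_ball_zero_iff, ← mem_ball_iff_norm])
    rw [add_sub_cancel] at h
    exact ne_of_lt (h.trans_lt (ENNReal.add_lt_top.2 ⟨h1, h2⟩))

end
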